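/- Let n ≥ 2, M > 0, and let v*: [0, M] → [0, ∞) be a nonincreasing, locally absolutely continuous function. Define the radial function v on the ball B of volume M centered at the origin by v(x) = v*(ω_n |x|ⁿ). Then ∫_B |∇v|² dm = n² ω_n^{2/n} ∫₀^M s^{2 − 2/n} ((v*)'(s))² ds. Moreover, if v* satisfies −(v*)'(s) ≤ Λ n^{−2} ω_n^{−2/n} s^{−2 + 2/n} ∫₀^s (v*(t))^{p−1} dt for almost every s ∈ (0, M) and some Λ > 0 and p ≥ 1, and v*(M) = 0, then ∫_B |∇v|² dm ≤ Λ ∫₀^M (v*(t))^p dt. -/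

import Mathlib

open MeasureTheory Metric Set
open scoped ENNReal NNReal Pointwise

noncomputable section

/-- A bounded set `Ω ⊆ ℝⁿ` has `C¹` boundary if every boundary point admits a local `C¹`
defining function with nonvanishing gradient. -/
def HasC1Boundary {n : ℕ} (Ω : Set (EuclideanSpace ℝ (Fin n))) : Prop :=
  ∀ x ∈ frontier Ω, ∃ (U : Set (EuclideanSpace ℝ (Fin n)))
    (f : EuclideanSpace ℝ (Fin n) → ℝ),
      IsOpen U ∧ x ∈ U ∧ ContDiff ℝ 1 f ∧ (∀ y ∈ U, fderiv ℝ f y ≠ 0) ∧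
      Ω ∩ U = {y | y ∈ U ∧ f y < 0}

/-- Admissible (nontrivial) test functions for the Sobolev quotient on `Ω`; these form a dense
subclass of `W₀^{1,2}(Ω) \ {0}`. -/
def Admissible {n : ℕ} (Ω : Set (EuclideanSpace ℝ (Fin n)))
    (f : EuclideanSpace ℝ (Fin n) → ℝ) : Prop :=
  ContDiff ℝ 1 f ∧ HasCompactSupport f ∧ tsupport f ⊆ Ω ∧ ∃ x, f x ≠ 0

/-- The Sobolev quotient `Φ_p(f) = ∫_Ω |∇f|² dm / (∫_Ω |f|^p dm)^{2/p}`. -/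
def sobolevQuotient {n : ℕ} (p : ℝ) (Ω : Set (EuclideanSpace ℝ (Fin n)))
    (f : EuclideanSpace ℝ (Fin n) → ℝ) : ℝ :=
  (∫ x in Ω, ‖fderiv ℝ f x‖ ^ 2) / (∫ x in Ω, |f x| ^ p) ^ (2 / p)

/-- The Sobolev constant `C_p(Ω)`. -/
def sobolevConstant {n : ℕ} (p : ℝ) (Ω : Set (EuclideanSpace ℝ (Fin n))) : ℝ :=
  sInf (sobolevQuotient p Ω '' {f | Admissible Ω f})

/-- `u` is a positive extremal function realizing `C_p(Ω)`. -/
def IsExtremal {n : ℕ} (p : ℝ) (Ω : Set (EuclideanSpace ℝ (Fin n)))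
    (u : EuclideanSpace ℝ (Fin n) → ℝ) : Prop :=
  Admissible Ω u ∧ (∀ x ∈ Ω, 0 < u x) ∧
    sobolevQuotient p Ω u = sobolevConstant p Ω

/-- The distribution function `μ(t) = |{x ∈ Ω : u(x) > t}|`. -/
def distFun {n : ℕ} (Ω : Set (EuclideanSpace ℝ (Fin n)))
    (u : EuclideanSpace ℝ (Fin n) → ℝ) (t : ℝ) : ℝ :=
  (volume {x | x ∈ Ω ∧ t < u x}).toReal

/-- The decreasing rearrangement `u*(s) = inf{t ≥ 0 : μ(t) < s}`. -/
def decRearrangement {n : ℕ} (Ω : Set (EuclideanSpace ℝ (Fin n)))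
    (u : EuclideanSpace ℝ (Fin n) → ℝ) (s : ℝ) : ℝ :=
  sInf {t : ℝ | 0 ≤ t ∧ distFun Ω u t < s}

/-- `ω_n`, the volume of the unit ball in `ℝⁿ`. -/
def unitBallVol (n : ℕ) : ℝ :=
  (volume (ball (0 : EuclideanSpace ℝ (Fin n)) 1)).toReal

/-- The Laplacian `Δf = ∑ᵢ ∂²f/∂xᵢ²`. -/
def laplacian {n : ℕ} (f : EuclideanSpace ℝ (Fin n) → ℝ)
    (x : EuclideanSpace ℝ (Fin n)) : ℝ :=
  ∑ i : Fin n, fderiv ℝ (fun y => fderiv ℝ f y (EuclideanSpace.single i 1)) x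
    (EuclideanSpace.single i 1)

/-!
In the volume coordinate `s = ω‖x‖ⁿ` the measure of the ball becomes Lebesgue measure on `(0, M)`.
The norm is differentiable almost everywhere with derivative of norm one, so the chain rule gives
`‖∇v‖ = n ω^{1/n} s^{1-1/n} |(v*)'(s)|`; squaring and integrating yields the energy identity.

For the upper bound, one factor `-(v*)'` of the energy density is kept and the other is replaced by
its assumed bound. This leaves `Λ ∫ -(v*)'(s) ∫₀ˢ (v*)^{p-1}`, which integration by parts turns into
`Λ ∫ v* (v*)^{p-1}`, because `v*` vanishes at `M` and the inner integral vanishes at `0`.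
-/

section ChangeOfVariable

variable {𝕜 F : Type*} [NontriviallyNormedField 𝕜] [CompleteSpace 𝕜]
  [NormedAddCommGroup F] [NormedSpace 𝕜 F]

theorem differentiableAt_comp_iff_of_hasStrictDerivAt {f : 𝕜 → F} {h : 𝕜 → 𝕜} {h' a : 𝕜}
    (hh : HasStrictDerivAt h h' a) (hh' : h' ≠ 0) :
    DifferentiableAt 𝕜 (fun t ↦ f (h t)) a ↔ DifferentiableAt 𝕜 f (h a) := by
  refine ⟨fun hfh ↦ ?_, fun hf ↦ hf.comp a hh.hasDerivAt.differentiableAt⟩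
  let k := hh.localInverse h h' a hh'
  have hka : k (h a) = a := HasStrictFDerivAt.localInverse_apply_image _
  have hfk : DifferentiableAt 𝕜 (fun s ↦ f (h (k s))) (h a) :=
    DifferentiableAt.comp (g := fun t ↦ f (h t)) (h a) (hka.symm ▸ hfh)
      (hh.to_localInverse hh').hasDerivAt.differentiableAt
  refine hfk.congr_of_eventuallyEq ?_
  filter_upwards [hh.eventually_right_inverse hh'] with s hs
  exact congrArg f hs.symm

/-- Where `f` is not differentiable, both derivatives are the junk value `0`. -/
theorem deriv_comp_of_hasStrictDerivAt {h : 𝕜 → 𝕜} {h' a : 𝕜} (hh : HasStrictDerivAt h h' a)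
    (hh' : h' ≠ 0) (f : 𝕜 → F) :
    deriv (fun t ↦ f (h t)) a = h' • deriv f (h a) := by
  by_cases hf : DifferentiableAt 𝕜 f (h a)
  · exact (hf.hasDerivAt.scomp a hh.hasDerivAt).deriv
  · rw [deriv_zero_of_not_differentiableAt hf, smul_zero, deriv_zero_of_not_differentiableAt]
    rwa [differentiableAt_comp_iff_of_hasStrictDerivAt hh hh']

end ChangeOfVariable

section RadialDerivative

variable {E G : Type*} [NormedAddCommGroup E] [NormedSpace ℝ E]
  [NormedAddCommGroup G] [NormedSpace ℝ G]

theorem differentiableAt_comp_norm_iff {g : ℝ → G} {x : E} (hx : x ≠ 0)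
    (hnorm : DifferentiableAt ℝ (‖·‖) x) :
    DifferentiableAt ℝ (fun y : E ↦ g ‖y‖) x ↔ DifferentiableAt ℝ g ‖x‖ := by
  refine ⟨fun hgx ↦ ?_, fun hg ↦ hg.comp x hnorm⟩
  have hx_pos : 0 < ‖x‖ := norm_pos_iff.mpr hx
  let ray : ℝ → E := fun r ↦ (r / ‖x‖) • x
  have hray : DifferentiableAt ℝ ray ‖x‖ := by fun_prop
  have hray_norm : ray ‖x‖ = x := by simp [ray, hx_pos.ne']
  have hgray : DifferentiableAt ℝ (fun r ↦ g ‖ray r‖) ‖x‖ :=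
    DifferentiableAt.comp (g := fun y : E ↦ g ‖y‖) ‖x‖ (hray_norm.symm ▸ hgx) hray
  refine hgray.congr_of_eventuallyEq ?_
  filter_upwards [lt_mem_nhds hx_pos] with r hr
  simp [ray, norm_smul, abs_of_pos hr, hx_pos.ne']

theorem ne_zero_of_differentiableAt_norm [Nontrivial E] {x : E}
    (hnorm : DifferentiableAt ℝ (‖·‖) x) : x ≠ 0 := by
  rintro rfl
  exact not_differentiableAt_norm_zero E hnorm

theorem norm_fderiv_comp_norm [Nontrivial E] {x : E} (hnorm : DifferentiableAt ℝ (‖·‖) x)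
    (g : ℝ → G) :
    ‖fderiv ℝ (fun y : E ↦ g ‖y‖) x‖ = ‖deriv g ‖x‖‖ := by
  have hx : x ≠ 0 := ne_zero_of_differentiableAt_norm hnorm
  by_cases hg : DifferentiableAt ℝ g ‖x‖
  · have hcomp := hg.hasFDerivAt.comp x hnorm.hasFDerivAt
    rw [show fderiv ℝ (fun y : E ↦ g ‖y‖) x = _ from hcomp.fderiv, ← toSpanSingleton_deriv,
      ContinuousLinearMap.toSpanSingleton_comp,
      ContinuousLinearMap.norm_smulRight_apply, norm_fderiv_norm hnorm, one_mul]
  · rw [deriv_zero_of_not_differentiableAt hg, fderiv_zero_of_not_differentiableAt,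
      norm_zero, norm_zero]
    rwa [differentiableAt_comp_norm_iff hx hnorm]

theorem mul_natCast_mul_pow_pred_eq_rpow {n : ℕ} (hn : n ≠ 0) {c r : ℝ} (hc : 0 < c)
    (hr : 0 < r) :
    c * (n * r ^ (n - 1)) = n * c ^ (1 / n : ℝ) * (c * r ^ n) ^ (1 - 1 / n : ℝ) := by
  have hc_pow : c ^ (1 / n : ℝ) * c ^ (1 - 1 / n : ℝ) = c := by
    rw [← Real.rpow_add hc, add_sub_cancel, Real.rpow_one]
  have hr_pow : (r ^ n) ^ (1 - 1 / n : ℝ) = r ^ (n - 1) := by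
    rw [← Real.rpow_natCast, ← Real.rpow_natCast, ← Real.rpow_mul hr.le,
      Nat.cast_pred (Nat.pos_of_ne_zero hn), mul_sub, mul_one, mul_one_div_cancel (by positivity)]
  calc c * (n * r ^ (n - 1))
      = n * (c ^ (1 / n : ℝ) * c ^ (1 - 1 / n : ℝ)) * r ^ (n - 1) := by rw [hc_pow]; ring
    _ = n * c ^ (1 / n : ℝ) * (c * r ^ n) ^ (1 - 1 / n : ℝ) := by
      rw [Real.mul_rpow hc.le (by positivity), hr_pow]; ring

theorem norm_fderiv_comp_mul_norm_pow [Nontrivial E] {x : E}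
    (hnorm : DifferentiableAt ℝ (‖·‖) x) {c : ℝ} (hc : 0 < c) {n : ℕ} (hn : n ≠ 0) (f : ℝ → G) :
    ‖fderiv ℝ (fun y : E ↦ f (c * ‖y‖ ^ n)) x‖ =
      n * c ^ (1 / n : ℝ) * (c * ‖x‖ ^ n) ^ (1 - 1 / n : ℝ) * ‖deriv f (c * ‖x‖ ^ n)‖ := by
  have hx : 0 < ‖x‖ := norm_pos_iff.mpr (ne_zero_of_differentiableAt_norm hnorm)
  have hderiv : HasStrictDerivAt (fun r : ℝ ↦ c * r ^ n) (c * (n * ‖x‖ ^ (n - 1))) ‖x‖ :=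
    (hasStrictDerivAt_pow n ‖x‖).const_mul c
  rw [norm_fderiv_comp_norm hnorm fun r ↦ f (c * r ^ n),
    deriv_comp_of_hasStrictDerivAt hderiv (by positivity), norm_smul,
    Real.norm_of_nonneg (by positivity), mul_natCast_mul_pow_pred_eq_rpow hn hc hx]

end RadialDerivative

section VolumeCoordinate

theorem measureReal_ball_pos {X : Type*} [PseudoMetricSpace X] [ProperSpace X] [MeasurableSpace X]
    (μ : Measure X) [μ.IsOpenPosMeasure] [IsFiniteMeasureOnCompacts μ] (x : X) {r : ℝ}
    (hr : 0 < r) : 0 < μ.real (ball x r) :=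
  ENNReal.toReal_pos (measure_ball_pos μ x hr).ne' measure_ball_lt_top.ne

open Module

variable {E F : Type*} [NormedAddCommGroup E] [NormedSpace ℝ E] [FiniteDimensional ℝ E]
  [Nontrivial E] [MeasurableSpace E] [BorelSpace E] (μ : Measure E) [μ.IsAddHaarMeasure]
  [NormedAddCommGroup F] [NormedSpace ℝ F]

theorem integral_comp_mul_norm_pow_finrank (h : ℝ → F) :
    ∫ x, h (μ.real (ball 0 1) * ‖x‖ ^ finrank ℝ E) ∂μ = ∫ s in Ioi 0, h s := by
  set ω := μ.real (ball (0 : E) 1)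
  set n := finrank ℝ E
  have hn : 0 < n := finrank_pos
  calc ∫ x, h (ω * ‖x‖ ^ n) ∂μ
      = n • ω • ∫ r in Ioi (0 : ℝ), r ^ (n - 1) • h (ω * r ^ n) :=
        integral_fun_norm_addHaar μ fun r ↦ h (ω * r ^ n)
    _ = ω • ∫ r in Ioi (0 : ℝ), ((n : ℝ) * r ^ ((n : ℝ) - 1)) • h (ω * r ^ (n : ℝ)) := by
        simp_rw [← Nat.cast_pred hn, Real.rpow_natCast, mul_smul, integral_smul,
          ← Nat.cast_smul_eq_nsmul ℝ n, smul_comm ω (n : ℝ)]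
    _ = ω • ∫ t in Ioi 0, h (ω * t) := by
        rw [integral_comp_rpow_Ioi_of_pos (g := fun t ↦ h (ω * t)) (Nat.cast_pos.mpr hn)]
    _ = ∫ s in Ioi 0, h s := by
        rw [integral_comp_mul_left_Ioi' h 0 (measureReal_ball_pos μ 0 one_pos), mul_zero]

theorem setIntegral_ball_comp_mul_norm_pow_finrank {R : ℝ} (hR : 0 ≤ R) (h : ℝ → F) :
    ∫ x in ball 0 R, h (μ.real (ball 0 1) * ‖x‖ ^ finrank ℝ E) ∂μ =
      ∫ s in 0..μ.real (ball (0 : E) R), h s := by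
  rw [← Measure.addHaar_real_closedBall_eq_addHaar_real_ball μ 0 R,
    Measure.addHaar_real_closedBall μ 0 hR, mul_comm (R ^ _)]
  set ω := μ.real (ball (0 : E) 1)
  set n := finrank ℝ E
  have hω : 0 < ω := measureReal_ball_pos μ 0 one_pos
  have hball : ball (0 : E) R = (fun x ↦ ω * ‖x‖ ^ n) ⁻¹' Iio (ω * R ^ n) := by
    ext x
    rw [mem_preimage, mem_ball_zero_iff, mem_Iio, mul_lt_mul_iff_right₀ hω,
      pow_lt_pow_iff_left₀ (norm_nonneg x) hR finrank_pos.ne']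
  calc ∫ x in ball 0 R, h (ω * ‖x‖ ^ n) ∂μ
      = ∫ x, (Iio (ω * R ^ n)).indicator h (ω * ‖x‖ ^ n) ∂μ := by
        rw [← integral_indicator measurableSet_ball, hball]
        rfl
    _ = ∫ s in Ioi 0, (Iio (ω * R ^ n)).indicator h s :=
        integral_comp_mul_norm_pow_finrank μ _
    _ = ∫ s in 0..ω * R ^ n, h s := by
        rw [setIntegral_indicator measurableSet_Iio, Ioi_inter_Iio,
          intervalIntegral.integral_of_le (by positivity), integral_Ioc_eq_integral_Ioo]

theorem setIntegral_ball_norm_fderiv_radial_sq {R : ℝ} (hR : 0 ≤ R) (f : ℝ → F) :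
    ∫ x in ball 0 R,
        ‖fderiv ℝ (fun y : E ↦ f (μ.real (ball 0 1) * ‖y‖ ^ finrank ℝ E)) x‖ ^ 2 ∂μ =
      (finrank ℝ E : ℝ) ^ 2 * μ.real (ball (0 : E) 1) ^ (2 / finrank ℝ E : ℝ) *
        ∫ s in 0..μ.real (ball (0 : E) R), s ^ (2 - 2 / finrank ℝ E : ℝ) * ‖deriv f s‖ ^ 2 := by
  rw [← setIntegral_ball_comp_mul_norm_pow_finrank μ hR, ← integral_const_mul]
  refine integral_congr_ae (ae_restrict_of_ae ?_)
  filter_upwards [ae_differentiableAt_norm (μ := μ)] with x hx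
  have hω := measureReal_ball_pos μ 0 one_pos
  have hs : 0 ≤ μ.real (ball (0 : E) 1) * ‖x‖ ^ finrank ℝ E := by positivity
  rw [norm_fderiv_comp_mul_norm_pow hx hω finrank_pos.ne', mul_pow, mul_pow, mul_pow,
    ← Real.rpow_mul_natCast hω.le, ← Real.rpow_mul_natCast hs]
  push_cast
  ring_nf

end VolumeCoordinate

section IntegrationByParts

open intervalIntegral

theorem integral_mul_integral_left_eq {u g : ℝ → ℝ} {a b : ℝ}
    (hu : IntervalIntegrable u volume a b) (hg : IntervalIntegrable g volume a b) :
    ∫ s in a..b, u s * ∫ t in a..s, g t = ∫ t in a..b, (∫ s in t..b, u s) * g t := by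
  let U : ℝ → ℝ := fun s ↦ ∫ t in b..s, u t
  let G : ℝ → ℝ := fun s ↦ ∫ t in a..s, g t
  have hU : AbsolutelyContinuousOnInterval U a b :=
    hu.absolutelyContinuousOnInterval_intervalIntegral right_mem_uIcc
  have hG : AbsolutelyContinuousOnInterval G a b :=
    hg.absolutelyContinuousOnInterval_intervalIntegral left_mem_uIcc
  calc ∫ s in a..b, u s * G s = ∫ s in a..b, deriv U s * G s := by
        refine integral_congr_ae ?_
        filter_upwards [hu.ae_hasDerivAt_integral] with s hs hsab
        rw [(hs (uIoc_subset_uIcc hsab) b right_mem_uIcc).deriv]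
    _ = -∫ t in a..b, U t * deriv G t := by
        rw [hU.integral_mul_deriv_eq_deriv_mul hG]
        simp [U, G]
    _ = ∫ t in a..b, (∫ s in t..b, u s) * g t := by
        rw [← intervalIntegral.integral_neg]
        refine integral_congr_ae ?_
        filter_upwards [hg.ae_hasDerivAt_integral] with t ht htab
        rw [(ht (uIoc_subset_uIcc htab) a left_mem_uIcc).deriv, ← neg_mul,
          ← integral_symm]

variable {f : ℝ → ℝ} {a b : ℝ}

theorem integral_deriv_mul_integral_left_eq {g : ℝ → ℝ} (hab : a ≤ b)
    (hf : IntervalIntegrable (deriv f) volume a b)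
    (hftc : ∀ t ∈ Ioc a b, f b - f t = ∫ s in t..b, deriv f s)
    (hg : IntervalIntegrable g volume a b) :
    ∫ s in a..b, deriv f s * ∫ t in a..s, g t = ∫ t in a..b, (f b - f t) * g t := by
  rw [integral_mul_integral_left_eq hf hg]
  refine integral_congr_ae (.of_forall fun t ht ↦ ?_)
  rw [hftc t (uIoc_of_le hab ▸ ht)]

theorem intervalIntegrable_deriv_of_antitoneOn (hf : AntitoneOn f (uIcc a b)) :
    IntervalIntegrable (deriv f) volume a b := by
  have hneg := hf.neg.intervalIntegrable_deriv.neg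
  exact hneg.congr fun s _ ↦ by simp

theorem deriv_nonpos_of_antitoneOn_Icc (hf : AntitoneOn f (Icc a b)) {s : ℝ} (hs : s ∈ Ioo a b) :
    deriv f s ≤ 0 := by
  rw [← derivWithin_of_mem_nhds (Icc_mem_nhds hs.1 hs.2)]
  exact hf.derivWithin_nonpos

theorem integral_mul_deriv_sq_le {k g : ℝ → ℝ} (hab : a ≤ b) (hf : AntitoneOn f (Icc a b))
    (hftc : ∀ t ∈ Ioc a b, f b - f t = ∫ s in t..b, deriv f s)
    (hk : ∀ s ∈ Ioo a b, 0 ≤ k s) (hg : IntervalIntegrable g volume a b)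
    (hle : ∀ᵐ s ∂volume.restrict (Ioo a b), k s * -deriv f s ≤ ∫ t in a..s, g t) :
    ∫ s in a..b, k s * deriv f s ^ 2 ≤ ∫ t in a..b, (f t - f b) * g t := by
  have hf' : IntervalIntegrable (deriv f) volume a b :=
    intervalIntegrable_deriv_of_antitoneOn (by rwa [uIcc_of_le hab])
  let G : ℝ → ℝ := fun s ↦ ∫ t in a..s, g t
  have hG : ContinuousOn G (uIcc a b) :=
    (hg.absolutelyContinuousOnInterval_intervalIntegral left_mem_uIcc).continuousOn
  have hint : IntegrableOn (fun s ↦ -deriv f s * G s) (Ioo a b) :=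
    (hf'.neg.mul_continuousOn hG).1.mono_set Ioo_subset_Ioc_self
  calc ∫ s in a..b, k s * deriv f s ^ 2
      = ∫ s in Ioo a b, k s * deriv f s ^ 2 := by
        rw [integral_of_le hab, integral_Ioc_eq_integral_Ioo]
    _ ≤ ∫ s in Ioo a b, -deriv f s * G s := by
        refine integral_mono_of_nonneg ?_ hint ?_
        · filter_upwards [ae_restrict_mem measurableSet_Ioo] with s hs
          exact mul_nonneg (hk s hs) (sq_nonneg _)
        · filter_upwards [hle, ae_restrict_mem measurableSet_Ioo] with s hs hmem
          have hnonneg : 0 ≤ -deriv f s :=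
            neg_nonneg.mpr (deriv_nonpos_of_antitoneOn_Icc hf hmem)
          linarith [mul_le_mul_of_nonneg_left hs hnonneg]
    _ = -∫ s in a..b, deriv f s * G s := by
        rw [integral_of_le hab, integral_Ioc_eq_integral_Ioo, ← MeasureTheory.integral_neg]
        simp only [neg_mul]
    _ = ∫ t in a..b, (f t - f b) * g t := by
        rw [integral_deriv_mul_integral_left_eq hab hf' hftc hg, ← intervalIntegral.integral_neg]
        simp only [← neg_mul, neg_sub]

theorem integral_mul_deriv_sq_le_mul_integral_rpow {k : ℝ → ℝ} {Λ p : ℝ} (hp : 1 ≤ p)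
    (hab : a ≤ b) (hf : AntitoneOn f (Icc a b)) (hfb : f b = 0)
    (hftc : ∀ t ∈ Ioc a b, f b - f t = ∫ s in t..b, deriv f s)
    (hk : ∀ s ∈ Ioo a b, 0 ≤ k s)
    (hle : ∀ᵐ s ∂volume.restrict (Ioo a b),
      k s * -deriv f s ≤ Λ * ∫ t in a..s, f t ^ (p - 1)) :
    ∫ s in a..b, k s * deriv f s ^ 2 ≤ Λ * ∫ t in a..b, f t ^ p := by
  have hnonneg : ∀ t ∈ Icc a b, 0 ≤ f t := fun t ht ↦ hfb ▸ hf ht (right_mem_Icc.mpr hab) ht.2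
  have hanti : AntitoneOn (fun t ↦ f t ^ (p - 1)) (Icc a b) := fun s hs t ht hst ↦
    Real.rpow_le_rpow (hnonneg t ht) (hf hs ht hst) (sub_nonneg.mpr hp)
  have hint : IntervalIntegrable (fun t ↦ Λ * f t ^ (p - 1)) volume a b :=
    (AntitoneOn.intervalIntegrable (by rwa [uIcc_of_le hab])).const_mul Λ
  calc ∫ s in a..b, k s * deriv f s ^ 2
      ≤ ∫ t in a..b, (f t - f b) * (Λ * f t ^ (p - 1)) :=
        integral_mul_deriv_sq_le hab hf hftc hk hint
          (by simpa only [intervalIntegral.integral_const_mul] using hle)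
    _ = ∫ t in a..b, Λ * f t ^ p := by
        refine integral_congr fun t ht ↦ ?_
        rw [uIcc_of_le hab] at ht
        have hpow : f t ^ p = f t ^ (p - 1) * f t := by
          conv_rhs => rw [← Real.rpow_add_one' (hnonneg t ht) (by linarith), sub_add_cancel]
        simp only [hfb, hpow]
        ring
    _ = Λ * ∫ t in a..b, f t ^ p := intervalIntegral.integral_const_mul _ _

end IntegrationByParts

open Module in
theorem radial_dirichlet_energy_general {E : Type*} [NormedAddCommGroup E] [NormedSpace ℝ E]
    [FiniteDimensional ℝ E] [Nontrivial E] [MeasurableSpace E] [BorelSpace E]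
    (μ : Measure E) [μ.IsAddHaarMeasure] {R : ℝ} (hR : 0 ≤ R) {vstar : ℝ → ℝ}
    (hmono : AntitoneOn vstar (Icc 0 (μ.real (ball (0 : E) R))))
    (hac : ∀ a b : ℝ, 0 < a → a ≤ b → b ≤ μ.real (ball (0 : E) R) →
      vstar b - vstar a = ∫ s in a..b, deriv vstar s)
    {v : E → ℝ} (hv : ∀ x, v x = vstar (μ.real (ball (0 : E) 1) * ‖x‖ ^ finrank ℝ E)) :
    ∫ x in ball 0 R, ‖fderiv ℝ v x‖ ^ 2 ∂μ =
      (finrank ℝ E : ℝ) ^ 2 * μ.real (ball (0 : E) 1) ^ (2 / finrank ℝ E : ℝ) *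
        ∫ s in 0..μ.real (ball (0 : E) R),
          s ^ (2 - 2 / finrank ℝ E : ℝ) * deriv vstar s ^ 2 ∧
    ∀ Λ p : ℝ, 1 ≤ p → vstar (μ.real (ball (0 : E) R)) = 0 →
      (∀ᵐ s ∂volume.restrict (Ioo 0 (μ.real (ball (0 : E) R))),
        -deriv vstar s ≤
          Λ * ((finrank ℝ E : ℝ) ^ 2)⁻¹ * μ.real (ball (0 : E) 1) ^ (-2 / finrank ℝ E : ℝ) *
            s ^ (-2 + 2 / finrank ℝ E : ℝ) * ∫ t in 0..s, vstar t ^ (p - 1)) →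
      ∫ x in ball 0 R, ‖fderiv ℝ v x‖ ^ 2 ∂μ ≤
        Λ * ∫ t in 0..μ.real (ball (0 : E) R), vstar t ^ p := by
  obtain rfl : v = _ := funext hv
  have henergy := setIntegral_ball_norm_fderiv_radial_sq μ hR vstar
  simp only [Real.norm_eq_abs, sq_abs] at henergy
  refine ⟨henergy, fun Λ p hp hvM hle ↦ ?_⟩
  have hω : 0 < μ.real (ball (0 : E) 1) := measureReal_ball_pos μ 0 one_pos
  rw [henergy, ← intervalIntegral.integral_const_mul]
  simp_rw [← mul_assoc]
  refine integral_mul_deriv_sq_le_mul_integral_rpow hp measureReal_nonneg hmono hvM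
    (fun t ht ↦ hac t _ ht.1 ht.2 le_rfl)
    (fun s hs ↦ mul_nonneg (by positivity) (Real.rpow_nonneg hs.1.le _)) ?_
  filter_upwards [hle, ae_restrict_mem measurableSet_Ioo] with s hs hmem
  have hs_pos : 0 < s := hmem.1
  have hn : (0 : ℝ) < finrank ℝ E := Nat.cast_pos.mpr finrank_pos
  rw [neg_div, Real.rpow_neg hω.le, neg_add_eq_sub, ← neg_sub, Real.rpow_neg hs_pos.le] at hs
  refine (mul_le_mul_of_nonneg_left hs (by positivity)).trans_eq ?_
  field_simp

/-- Dirichlet energy of a radial test function. Let `v* : [0,M] → [0,∞)` be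
nonincreasing and locally absolutely continuous, and let `v(x) = v*(ω_n |x|ⁿ)` on the ball `B`
of volume `M` centered at the origin. Then
`∫_B |∇v|² dm = n² ω_n^{2/n} ∫₀^M s^{2−2/n} ((v*)'(s))² ds`; moreover if `v*(M) = 0` and
`−(v*)'(s) ≤ Λ n^{−2} ω_n^{−2/n} s^{−2+2/n} ∫₀^s (v*)^{p−1}` for a.e. `s ∈ (0,M)`, then
`∫_B |∇v|² dm ≤ Λ ∫₀^M (v*)^p`. -/
theorem radial_dirichlet_energy (n : ℕ) (hn : 2 ≤ n) (M : ℝ) (hM : 0 < M)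
    (vstar : ℝ → ℝ)
    (hnonneg : ∀ s ∈ Icc (0 : ℝ) M, 0 ≤ vstar s)
    (hmono : AntitoneOn vstar (Icc (0 : ℝ) M))
    (hac : ∀ a b : ℝ, 0 < a → a ≤ b → b ≤ M →
      vstar b - vstar a = ∫ s in a..b, deriv vstar s)
    (R : ℝ) (hR : 0 < R)
    (hvol : (volume (ball (0 : EuclideanSpace ℝ (Fin n)) R)).toReal = M)
    (v : EuclideanSpace ℝ (Fin n) → ℝ)
    (hv : ∀ x, v x = vstar (unitBallVol n * ‖x‖ ^ n)) :
    (∫ x in ball (0 : EuclideanSpace ℝ (Fin n)) R, ‖fderiv ℝ v x‖ ^ 2) =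
      (n : ℝ) ^ 2 * unitBallVol n ^ ((2 : ℝ) / (n : ℝ)) *
        ∫ s in (0 : ℝ)..M, s ^ (2 - 2 / (n : ℝ)) * (deriv vstar s) ^ 2 ∧
    ∀ (Λ p : ℝ), 0 < Λ → 1 ≤ p → vstar M = 0 →
      (∀ᵐ s ∂(volume.restrict (Ioo (0 : ℝ) M)),
        -(deriv vstar s) ≤
          Λ * ((n : ℝ) ^ 2)⁻¹ * unitBallVol n ^ (-(2 : ℝ) / (n : ℝ)) *
            s ^ ((-2 : ℝ) + 2 / (n : ℝ)) * ∫ t in (0 : ℝ)..s, vstar t ^ (p - 1)) →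
      (∫ x in ball (0 : EuclideanSpace ℝ (Fin n)) R, ‖fderiv ℝ v x‖ ^ 2) ≤
        Λ * ∫ t in (0 : ℝ)..M, vstar t ^ p := by
  subst hvol
  have : Nonempty (Fin n) := ⟨⟨0, by lia⟩⟩
  obtain ⟨henergy, henergy_le⟩ :=
    radial_dirichlet_energy_general (volume : Measure (EuclideanSpace ℝ (Fin n))) hR.le hmono hac
      (v := v) (by rwa [finrank_euclideanSpace_fin])
  rw [finrank_euclideanSpace_fin] at henergy henergy_le
  exact ⟨henergy, fun Λ p _ ↦ henergy_le Λ p⟩
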